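/- For all i, j, h ∈ {0,1,…,d} with i ≠ j: the matrix E_i* A_j E_h* is nonzero if and only if h = max{i, j}. -/

import Mathlib

open Finset Matrix

/-- Vertex set of the wreath product `K_{n 0} ≀ K_{n 1} ≀ ⋯ ≀ K_{n (d-1)}`
(paper indices `n_1, …, n_d` correspond to `n 0, …, n (d-1)`). -/
abbrev Vx (d : ℕ) (n : ℕ → ℕ) : Type := (i : Fin d) → Fin (n i)

/-- `delta x y = 0` if `x = y`; otherwise `delta x y` is the largest (1-based)
index at which `x` and `y` differ. -/
def delta {d : ℕ} {n : ℕ → ℕ} (x y : Vx d n) : ℕ :=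
  (Finset.univ.filter fun i => x i ≠ y i).sup fun i => (i : ℕ) + 1

/-- The `i`-th adjacency matrix of the wreath product: `(A i) x y = 1` iff `delta x y = i`. -/
noncomputable def A (d : ℕ) (n : ℕ → ℕ) (i : ℕ) : Matrix (Vx d n) (Vx d n) ℂ :=
  Matrix.of fun x y => if delta x y = i then 1 else 0

/-- The valencies: `k 0 = 1` and, for `1 ≤ i`, `k i = n_1 ⋯ n_{i-1} (n_i - 1)`,
i.e. `k i = n 0 ⋯ n (i-2) * (n (i-1) - 1)`. -/
def k (n : ℕ → ℕ) (i : ℕ) : ℕ :=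
  if i = 0 then 1 else (∏ j ∈ Finset.range (i - 1), n j) * (n (i - 1) - 1)

/-- The dual idempotent `E_i*` with respect to the base point `x₀`: the diagonal
0-1 matrix with `(E_i*)_{yy} = 1` iff `delta x₀ y = i`. -/
noncomputable def Es {d : ℕ} {n : ℕ → ℕ} (x₀ : Vx d n) (i : ℕ) :
    Matrix (Vx d n) (Vx d n) ℂ :=
  Matrix.of fun y z => if y = z ∧ delta x₀ y = i then 1 else 0

/-- The all-ones matrix `J`. -/
noncomputable def Jm (d : ℕ) (n : ℕ → ℕ) : Matrix (Vx d n) (Vx d n) ℂ :=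
  Matrix.of fun _ _ => 1

/-- The matrices `G i j`. -/
noncomputable def G {d : ℕ} {n : ℕ → ℕ} (x₀ : Vx d n) (i j : ℕ) :
    Matrix (Vx d n) (Vx d n) ℂ :=
  if i < j then ((k n j : ℂ))⁻¹ • (Es x₀ i * A d n j * Es x₀ j)
  else if j < i then ((k n j : ℂ))⁻¹ • (Es x₀ i * A d n i * Es x₀ j)
  else ((k n i : ℂ))⁻¹ • (Es x₀ i * Jm d n * Es x₀ i)

/-- The span `U` of the matrices `G i j`, `i, j ∈ [d]`. -/
noncomputable def Uspan {d : ℕ} {n : ℕ → ℕ} (x₀ : Vx d n) :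
    Submodule ℂ (Matrix (Vx d n) (Vx d n) ℂ) :=
  Submodule.span ℂ (Set.range fun p : Fin (d + 1) × Fin (d + 1) => G x₀ p.1 p.2)

/-- The Terwilliger algebra of the wreath product with respect to `x₀`. -/
noncomputable def Ter {d : ℕ} {n : ℕ → ℕ} (x₀ : Vx d n) :
    Subalgebra ℂ (Matrix (Vx d n) (Vx d n) ℂ) :=
  Algebra.adjoin ℂ
    ((Set.range fun i : Fin (d + 1) => A d n i) ∪ (Set.range fun i : Fin (d + 1) => Es x₀ i))

/-- The matrices `F i h`, for `1 ≤ i ≤ d` and `0 ≤ h ≤ i - 1`. -/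
noncomputable def F {d : ℕ} {n : ℕ → ℕ} (x₀ : Vx d n) (i h : ℕ) :
    Matrix (Vx d n) (Vx d n) ℂ :=
  if h < i - 1 then
    (∑ j ∈ Finset.range (h + 1), (k n j : ℂ))⁻¹ •
        (∑ j ∈ Finset.range (h + 1), Es x₀ i * A d n j * Es x₀ i)
      - (∑ j ∈ Finset.range (h + 2), (k n j : ℂ))⁻¹ •
          (∑ j ∈ Finset.range (h + 2), Es x₀ i * A d n j * Es x₀ i)
  else
    (∑ j ∈ Finset.range i, (k n j : ℂ))⁻¹ •
        (∑ j ∈ Finset.range i, Es x₀ i * A d n j * Es x₀ i)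
      - G x₀ i i

theorem delta_le_iff {d : ℕ} {n : ℕ → ℕ} (x y : Vx d n) (m : ℕ) :
    delta x y ≤ m ↔ ∀ i : Fin d, x i ≠ y i → (i : ℕ) + 1 ≤ m := by
  simp [delta, Finset.sup_le_iff]

theorem delta_symm {d : ℕ} {n : ℕ → ℕ} (x y : Vx d n) : delta x y = delta y x := by
  simp only [delta, ne_comm]

theorem delta_tri {d : ℕ} {n : ℕ → ℕ} (x y z : Vx d n) :
    delta x z ≤ max (delta x y) (delta y z) := by
  rw [delta_le_iff]
  intro i hi
  by_cases h : x i = y i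
  · exact le_max_of_le_right ((delta_le_iff y z _).1 le_rfl i (h ▸ hi))
  · exact le_max_of_le_left ((delta_le_iff x y _).1 le_rfl i h)

theorem delta_ex {d : ℕ} {n : ℕ → ℕ} (hn : ∀ i < d, 2 ≤ n i) (x : Vx d n) (m : ℕ)
    (hm : m ≤ d) : ∃ y, delta x y = m := by
  rcases m with _ | m
  · exact ⟨x, by simp [delta]⟩
  · have h2 := hn m hm
    let p : Fin d := ⟨m, hm⟩
    haveI : Nontrivial (Fin (n p)) := Fin.nontrivial_iff_two_le.2 h2
    obtain ⟨a, ha⟩ := exists_ne (x p)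
    refine ⟨Function.update x p a, le_antisymm ?_ ?_⟩
    · rw [delta_le_iff]
      intro i hi
      by_cases h : i = p
      · subst h; exact le_rfl
      · simp [Function.update_of_ne h] at hi
    · exact (delta_le_iff x (Function.update x p a) _).1 le_rfl p (by simpa using ha.symm)

theorem entry {d : ℕ} {n : ℕ → ℕ} (x₀ : Vx d n) (i j h : ℕ) (y z : Vx d n) :
    (Es x₀ i * A d n j * Es x₀ h) y z =
      if delta x₀ y = i ∧ delta y z = j ∧ delta x₀ z = h then 1 else 0 := by
  have e : ∀ m, Es x₀ m = Matrix.diagonal fun y => if delta x₀ y = m then 1 else 0 := by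
    intro m
    ext a b
    by_cases hab : a = b <;> simp [Es, Matrix.diagonal_apply, hab]
  rw [e, e, Matrix.mul_diagonal, Matrix.diagonal_mul]
  simp only [A, Matrix.of_apply]
  split_ifs <;> simp_all

/-- for `i ≠ j`, `E_i* A_j E_h* ≠ 0` iff `h = max i j`. -/
theorem stmt11 (d : ℕ) (hd : 1 ≤ d) (n : ℕ → ℕ) (hn : ∀ i < d, 2 ≤ n i)
    (x₀ : Vx d n) (i j h : ℕ) (hi : i ≤ d) (hj : j ≤ d) (hh : h ≤ d) (hij : i ≠ j) :
    Es x₀ i * A d n j * Es x₀ h ≠ 0 ↔ h = max i j := by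
  have key : ∀ y z : Vx d n, delta x₀ y = i → delta y z = j → delta x₀ z = max i j := by
    intro y z h1 h2
    have a := delta_tri x₀ y z
    have b := delta_tri x₀ z y
    have c := delta_tri y x₀ z
    rw [delta_symm z y] at b
    rw [delta_symm y x₀] at c
    omega
  constructor
  · intro hne
    by_contra hcon
    apply hne
    ext y z
    rw [entry, if_neg]
    · rfl
    · rintro ⟨h1, h2, h3⟩
      exact hcon (h3 ▸ key y z h1 h2)
  · intro hmax h0
    obtain ⟨y, hy⟩ := delta_ex hn x₀ i hi
    obtain ⟨z, hz⟩ := delta_ex hn y j hj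
    have := congrFun (congrFun h0 y) z
    rw [entry, if_pos ⟨hy, hz, hmax ▸ key y z hy hz⟩] at this
    simp at this
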